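/- arXiv:2003.12991 — 4 statements merged into one kernel-verified Lean document; each statement's English description precedes it below -/
import Mathlib

section
/- Let n ≥ 3 be odd and let m_1, m_2 be positive integers. Setting c_1 = F_{n+1} m_1 + F_n m_2 and c_2 = F_n m_1 + F_{n-1} m_2, the strict inequalities F_{n+1}/F_n < c_1/c_2 < F_n/F_{n-1} hold (as real numbers). -/
/-! For odd `n`, Cassini's identity gives `F_{n+1} F_{n-1} < F_n ^ 2`, that is,
`F_{n+1} / F_n < F_n / F_{n-1}`. The quotient `c₁ / c₂` is a mediant of these two fractions with
positive weights `m₁`, `m₂`, so it lies strictly between them. -/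

/-- Cassini's identity at the odd index `2 * k + 1`. -/
theorem fib_cassini_odd (k : ℕ) :
    Nat.fib (2 * k + 2) * Nat.fib (2 * k) + 1 = Nat.fib (2 * k + 1) ^ 2 := by
  induction k with
  | zero => simp
  | succ k ih =>
    have h2 : Nat.fib (2 * k + 2) = Nat.fib (2 * k) + Nat.fib (2 * k + 1) := Nat.fib_add_two
    have h3 : Nat.fib (2 * k + 3) = Nat.fib (2 * k + 1) + Nat.fib (2 * k + 2) := Nat.fib_add_two
    have h4 : Nat.fib (2 * k + 4) = Nat.fib (2 * k + 2) + Nat.fib (2 * k + 3) := Nat.fib_add_two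
    change Nat.fib (2 * k + 4) * Nat.fib (2 * k + 2) + 1 = Nat.fib (2 * k + 3) ^ 2
    rw [h4, h3, h2]
    rw [h2] at ih
    linarith

theorem stmt_4 (n : ℕ) (hn : 3 ≤ n) (hodd : Odd n)
    (m₁ m₂ : ℤ) (hm₁ : 0 < m₁) (hm₂ : 0 < m₂)
    (c₁ c₂ : ℤ)
    (hc₁ : c₁ = (Nat.fib (n + 1) : ℤ) * m₁ + (Nat.fib n : ℤ) * m₂)
    (hc₂ : c₂ = (Nat.fib n : ℤ) * m₁ + (Nat.fib (n - 1) : ℤ) * m₂) :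
    (Nat.fib (n + 1) : ℝ) / (Nat.fib n : ℝ) < (c₁ : ℝ) / (c₂ : ℝ) ∧
    (c₁ : ℝ) / (c₂ : ℝ) < (Nat.fib n : ℝ) / (Nat.fib (n - 1) : ℝ) := by
  obtain ⟨k, rfl⟩ := hodd
  have hb : (0 : ℝ) < Nat.fib (2 * k + 1) := by
    exact_mod_cast Nat.fib_pos.2 (by omega)
  have ha : (0 : ℝ) < Nat.fib (2 * k) := by
    exact_mod_cast Nat.fib_pos.2 (by omega)
  have hC : (Nat.fib (2 * k + 2) : ℝ) * Nat.fib (2 * k) + 1 = (Nat.fib (2 * k + 1) : ℝ) ^ 2 := by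
    exact_mod_cast fib_cassini_odd k
  have h1 : (0 : ℝ) < m₁ := by exact_mod_cast hm₁
  have h2 : (0 : ℝ) < m₂ := by exact_mod_cast hm₂
  rw [hc₁, hc₂]
  simp only [Nat.add_sub_cancel]
  push_cast
  change (Nat.fib (2 * k + 2) : ℝ) / _ < ((Nat.fib (2 * k + 2) : ℝ) * _ + _) / _ ∧
    ((Nat.fib (2 * k + 2) : ℝ) * _ + _) / _ < _
  generalize (Nat.fib (2 * k + 2) : ℝ) = c at *
  generalize (Nat.fib (2 * k + 1) : ℝ) = b at *
  generalize (Nat.fib (2 * k) : ℝ) = a at *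
  have hd : 0 < b * m₁ + a * m₂ := by positivity
  constructor
  · rw [div_lt_div_iff₀ hb hd]
    linear_combination h2 + (m₂ : ℝ) * hC
  · rw [div_lt_div_iff₀ hd ha]
    linear_combination h1 + (m₁ : ℝ) * hC
end

section
/- Let n ≥ 3 be odd and let m_1, m_2 be positive integers. Set c_1 = F_{n+1} m_1 + F_n m_2 and c_2 = F_n m_1 + F_{n-1} m_2. Then for integers h and k, the conditions [c_2 + k > 0 and F_{n+1}/F_n < (c_1 + h)/(c_2 + k) < F_n/F_{n-1}] hold if and only if (h·F_{n-1} - m_1)/F_n < k < (h·F_n + m_2)/F_{n+1} (all comparisons as real numbers); moreover the latter double inequality already forces c_2 + k > 0. -/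
/-!
Write `a, b, d` for `F (n+1), F n, F (n-1)` and `X = c₁ + h`, `Y = c₂ + k`. For odd `n`, Cassini's
identity reads `b² = a d + 1`, whence `b c₁ - a c₂ = m₂` and `d c₁ - b c₂ = -m₁`. When `Y > 0`,
clearing denominators therefore turns `a / b < X / Y` into `a k < b h + m₂` and `X / Y < b / d`
into `d h - m₁ < b k`. Conversely these two inequalities say `a Y < b X` and `d X < b Y`, with no
sign condition on `Y`, so that `a d Y < b d X < b² Y = a d Y + Y`, which forces `Y > 0`.
-/

/-- Cassini's identity at odd indices. -/
lemma fib_odd_sq (j : ℕ) :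
    Nat.fib (2 * j + 1) ^ 2 = Nat.fib (2 * j + 2) * Nat.fib (2 * j) + 1 := by
  induction j with
  | zero => simp
  | succ j ih =>
    have h2 := Nat.fib_add_two (n := 2 * j)
    have h3 := Nat.fib_add_two (n := 2 * j + 1)
    have h4 := Nat.fib_add_two (n := 2 * j + 2)
    simp only [mul_add, mul_one, add_assoc, Nat.reduceAdd] at *
    rw [h4, h3]
    rw [h2] at ih ⊢
    linarith

theorem stmt_8 (n : ℕ) (hn : 3 ≤ n) (hodd : Odd n)
    (m₁ m₂ : ℤ) (hm₁ : 0 < m₁) (hm₂ : 0 < m₂)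
    (c₁ c₂ : ℤ)
    (hc₁ : c₁ = (Nat.fib (n + 1) : ℤ) * m₁ + (Nat.fib n : ℤ) * m₂)
    (hc₂ : c₂ = (Nat.fib n : ℤ) * m₁ + (Nat.fib (n - 1) : ℤ) * m₂)
    (h k : ℤ) :
    ((0 < c₂ + k ∧
      (Nat.fib (n + 1) : ℝ) / (Nat.fib n : ℝ) < ((c₁ : ℝ) + (h : ℝ)) / ((c₂ : ℝ) + (k : ℝ)) ∧
      ((c₁ : ℝ) + (h : ℝ)) / ((c₂ : ℝ) + (k : ℝ)) < (Nat.fib n : ℝ) / (Nat.fib (n - 1) : ℝ)) ↔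
     (((h : ℝ) * (Nat.fib (n - 1) : ℝ) - (m₁ : ℝ)) / (Nat.fib n : ℝ) < (k : ℝ) ∧
      (k : ℝ) < ((h : ℝ) * (Nat.fib n : ℝ) + (m₂ : ℝ)) / (Nat.fib (n + 1) : ℝ))) ∧
    ((((h : ℝ) * (Nat.fib (n - 1) : ℝ) - (m₁ : ℝ)) / (Nat.fib n : ℝ) < (k : ℝ) ∧
      (k : ℝ) < ((h : ℝ) * (Nat.fib n : ℝ) + (m₂ : ℝ)) / (Nat.fib (n + 1) : ℝ)) →
     0 < c₂ + k) := by
  obtain ⟨j, rfl⟩ := hodd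
  have hcas : (Nat.fib (2 * j + 1) : ℝ) ^ 2
      = (Nat.fib (2 * j + 2) : ℝ) * (Nat.fib (2 * j) : ℝ) + 1 := by
    exact_mod_cast fib_odd_sq j
  have ha : (0 : ℝ) < (Nat.fib (2 * j + 2) : ℝ) := by
    exact_mod_cast Nat.fib_pos.2 (by omega)
  have hb : (0 : ℝ) < (Nat.fib (2 * j + 1) : ℝ) := by
    exact_mod_cast Nat.fib_pos.2 (by omega)
  have hd : (0 : ℝ) < (Nat.fib (2 * j) : ℝ) := by
    exact_mod_cast Nat.fib_pos.2 (by omega)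
  have e₁ : (c₁ : ℝ) = (Nat.fib (2 * j + 2) : ℝ) * m₁ + (Nat.fib (2 * j + 1) : ℝ) * m₂ := by
    exact_mod_cast hc₁
  have e₂ : (c₂ : ℝ) = (Nat.fib (2 * j + 1) : ℝ) * m₁ + (Nat.fib (2 * j) : ℝ) * m₂ := by
    exact_mod_cast hc₂
  have hpos : 0 < c₂ + k ↔ (0 : ℝ) < (c₂ : ℝ) + (k : ℝ) := by norm_cast
  simp only [Nat.add_sub_cancel, add_assoc, Nat.reduceAdd]
  rw [hpos]
  generalize (Nat.fib (2 * j + 2) : ℝ) = a at *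
  generalize (Nat.fib (2 * j + 1) : ℝ) = b at *
  generalize (Nat.fib (2 * j) : ℝ) = d at *
  have k₁ : b * c₁ - a * c₂ = m₂ := by
    rw [e₁, e₂]; linear_combination (m₂ : ℝ) * hcas
  have k₂ : d * c₁ - b * c₂ = -m₁ := by
    rw [e₁, e₂]; linear_combination -(m₁ : ℝ) * hcas
  rw [div_lt_iff₀ (c := b) (b := (h : ℝ) * d - m₁) hb, lt_div_iff₀ ha]
  have key : ((h : ℝ) * d - m₁ < k * b ∧ (k : ℝ) * a < h * b + m₂) →
      (0 : ℝ) < (c₂ : ℝ) + k := by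
    rintro ⟨p, q⟩
    have p' : d * ((c₁ : ℝ) + h) < b * (c₂ + k) := by linarith
    have q' : a * ((c₂ : ℝ) + k) < b * (c₁ + h) := by linarith
    have p'' := mul_lt_mul_of_pos_left p' hb
    have q'' := mul_lt_mul_of_pos_left q' hd
    have hY : b * (b * ((c₂ : ℝ) + k)) = d * (a * (c₂ + k)) + (c₂ + k) := by
      linear_combination ((c₂ : ℝ) + k) * hcas
    linarith
  refine ⟨⟨?_, fun H => ?_⟩, key⟩
  · rintro ⟨hY, p, q⟩
    rw [div_lt_div_iff₀ hb hY] at p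
    rw [div_lt_div_iff₀ hY hd] at q
    constructor <;> linarith
  · have hY := key H
    obtain ⟨p, q⟩ := H
    refine ⟨hY, ?_, ?_⟩
    · rw [div_lt_div_iff₀ hb hY]; linarith
    · rw [div_lt_div_iff₀ hY hd]; linarith
end

section
/- Let n ≥ 3 be odd, let m_1, m_2 be positive integers with m_1 < F_{n-1} and m_2 < F_{n-1}, and set c_1 = F_{n+1} m_1 + F_n m_2, c_2 = F_n m_1 + F_{n-1} m_2. Let e_1 be an integer and put c̄_1 = c_1 + e_1. If c̄_1/c_2 < F_{n+1}/F_n (as real numbers), then e_1 = ⌊c̄_1 - c_2·F_{n+1}/F_n⌋, the floor of the real number c̄_1 - c_2·F_{n+1}/F_n. -/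
/-!
For odd `n`, Cassini's identity `F_n ^ 2 - F_{n-1} F_{n+1} = 1` (`cassini_odd`) gives
`c₁ - c₂ F_{n+1} / F_n = m₂ / F_n`. Hence the real number whose floor is taken equals
`e₁ + m₂ / F_n`, and `0 < m₂ < F_{n-1} ≤ F_n` puts the second summand in `(0, 1)`.
-/

/-- Cassini's identity at an odd index. -/
lemma cassini_odd (k : ℕ) :
    (Nat.fib (2 * k + 1) : ℤ) ^ 2 - Nat.fib (2 * k) * Nat.fib (2 * k + 2) = 1 := by
  induction k with
  | zero => simp
  | succ k ih =>
    have h2 : Nat.fib (2 * k + 2) = Nat.fib (2 * k) + Nat.fib (2 * k + 1) := Nat.fib_add_two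
    have h3 : Nat.fib (2 * k + 3) = Nat.fib (2 * k + 1) + Nat.fib (2 * k + 2) := Nat.fib_add_two
    have h4 : Nat.fib (2 * k + 4) = Nat.fib (2 * k + 2) + Nat.fib (2 * k + 3) := Nat.fib_add_two
    change (Nat.fib (2 * k + 3) : ℤ) ^ 2 - Nat.fib (2 * k + 2) * Nat.fib (2 * k + 4) = 1
    rw [h4, h3, h2]
    rw [h2] at ih
    push_cast at ih ⊢
    linear_combination ih

theorem stmt_10 (n : ℕ) (hn : 3 ≤ n) (hodd : Odd n)
    (m₁ m₂ : ℤ) (hm₁ : 0 < m₁) (hm₂ : 0 < m₂)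
    (hm₁' : m₁ < (Nat.fib (n - 1) : ℤ)) (hm₂' : m₂ < (Nat.fib (n - 1) : ℤ))
    (c₁ c₂ : ℤ)
    (hc₁ : c₁ = (Nat.fib (n + 1) : ℤ) * m₁ + (Nat.fib n : ℤ) * m₂)
    (hc₂ : c₂ = (Nat.fib n : ℤ) * m₁ + (Nat.fib (n - 1) : ℤ) * m₂)
    (e₁ : ℤ) (cbar₁ : ℤ) (hbar : cbar₁ = c₁ + e₁)
    (hratio : (cbar₁ : ℝ) / (c₂ : ℝ) < (Nat.fib (n + 1) : ℝ) / (Nat.fib n : ℝ)) :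
    e₁ = ⌊(cbar₁ : ℝ) - (c₂ : ℝ) * ((Nat.fib (n + 1) : ℝ) / (Nat.fib n : ℝ))⌋ := by
  have hpos : (0 : ℝ) < Nat.fib n := by exact_mod_cast Nat.fib_pos.2 (by omega)
  have hlt : (m₂ : ℝ) < Nat.fib n := by
    exact_mod_cast hm₂'.trans_le (by exact_mod_cast Nat.fib_mono (Nat.sub_le n 1))
  have hcas : (Nat.fib n : ℝ) ^ 2 - Nat.fib (n - 1) * Nat.fib (n + 1) = 1 := by
    obtain ⟨k, rfl⟩ := hodd
    exact_mod_cast cassini_odd k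
  have key : (cbar₁ : ℝ) - (c₂ : ℝ) * ((Nat.fib (n + 1) : ℝ) / (Nat.fib n : ℝ))
      = e₁ + m₂ / Nat.fib n := by
    subst hbar hc₁ hc₂
    push_cast
    field_simp
    linear_combination (m₂ : ℝ) * hcas
  have hm : (0 : ℝ) < m₂ := by exact_mod_cast hm₂
  rw [key, eq_comm, Int.floor_eq_iff]
  constructor
  · have := div_pos hm hpos
    linarith
  · have := (div_lt_one hpos).2 hlt
    linarith
end

section
/- For every integer n ≥ 1 and all positive integers u, v, the greatest common divisor of F_{n+1}·u + F_n·v and F_n·u + F_{n-1}·v equals the greatest common divisor of u and v. -/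
/-- One multiplication by `Q` sends a row `(a, b)` to `(a + b, a)`, a Euclidean step that
preserves the gcd; the index is shifted to avoid natural-number subtraction. -/
theorem gcd_fib_row (k u v : ℕ) :
    Nat.gcd (Nat.fib (k + 2) * u + Nat.fib (k + 1) * v)
            (Nat.fib (k + 1) * u + Nat.fib k * v) = Nat.gcd u v := by
  induction k with
  | zero => simp [Nat.gcd_comm]
  | succ k ih =>
    have h : Nat.fib (k + 1 + 2) * u + Nat.fib (k + 1 + 1) * v =
        (Nat.fib (k + 1) * u + Nat.fib k * v) +
          (Nat.fib (k + 2) * u + Nat.fib (k + 1) * v) := by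
      rw [Nat.fib_add_two (n := k + 1), Nat.fib_add_two (n := k)]
      ring
    rw [h, Nat.gcd_add_self_left, Nat.gcd_comm, ih]

theorem stmt_15 (n : ℕ) (hn : 1 ≤ n) (u v : ℕ) (hu : 0 < u) (hv : 0 < v) :
    Nat.gcd (Nat.fib (n + 1) * u + Nat.fib n * v)
            (Nat.fib n * u + Nat.fib (n - 1) * v) = Nat.gcd u v := by
  obtain ⟨k, rfl⟩ := Nat.exists_eq_add_of_le' hn
  exact gcd_fib_row k u v
end
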